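/- (Proposition 3) Let 0 < p < 1. Then the maximum achievable fidelity for the amplitude damping channel Λ_p satisfies 𝓕(Λ_p) := sup { F*(ρ(χ(α), Λ_p)) : 1/2 ≤ α² < 1 } = 1 − p/2, and the supremum is attained at the non-maximally entangled state |χ₀⟩ = (1/√(2−p))|00⟩ + √((1−p)/(2−p))|11⟩. -/

import Mathlib

open Matrix Complex
open scoped Kronecker ComplexOrder

/-- Index type for two qubits: the product basis of ℂ² ⊗ ℂ². -/
abbrev Q2 := Fin 2 × Fin 2

/-- Kraus operator `M₀` of the amplitude damping channel. -/
noncomputable def M0 (p : ℝ) : Matrix (Fin 2) (Fin 2) ℂ :=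
  !![1, 0; 0, (Real.sqrt (1 - p) : ℂ)]

/-- Kraus operator `M₁` of the amplitude damping channel. -/
noncomputable def M1 (p : ℝ) : Matrix (Fin 2) (Fin 2) ℂ :=
  !![0, (Real.sqrt p : ℂ); 0, 0]

/-- Outer product `|ψ⟩⟨ψ|` of a two-qubit vector. -/
noncomputable def outer (ψ : Q2 → ℂ) : Matrix Q2 Q2 ℂ :=
  Matrix.of fun i j => ψ i * star (ψ j)

/-- The state `ρ(χ, Λ_p)` obtained by applying the amplitude damping channel
with parameter `p` to the second qubit: `Σᵢ (I ⊗ Mᵢ) ρ (I ⊗ Mᵢ)†`. -/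
noncomputable def ampDamp (p : ℝ) (ρ : Matrix Q2 Q2 ℂ) : Matrix Q2 Q2 ℂ :=
  ((1 : Matrix (Fin 2) (Fin 2) ℂ) ⊗ₖ M0 p) * ρ * ((1 : Matrix (Fin 2) (Fin 2) ℂ) ⊗ₖ M0 p)ᴴ +
  ((1 : Matrix (Fin 2) (Fin 2) ℂ) ⊗ₖ M1 p) * ρ * ((1 : Matrix (Fin 2) (Fin 2) ℂ) ⊗ₖ M1 p)ᴴ

/-- The pure state `|χ⟩ = a|00⟩ + b|11⟩`. -/
noncomputable def ketChi (a b : ℝ) : Q2 → ℂ :=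
  fun ij => if ij = ((0 : Fin 2), (0 : Fin 2)) then (a : ℂ)
    else if ij = ((1 : Fin 2), (1 : Fin 2)) then (b : ℂ) else 0

/-- The maximally entangled state `|Φ⁺⟩ = (|00⟩ + |11⟩)/√2`. -/
noncomputable def phiPlus : Q2 → ℂ := ketChi (Real.sqrt 2)⁻¹ (Real.sqrt 2)⁻¹

/-- The optimal transmitted state `|χ₀⟩ = (1/√(2−p))|00⟩ + √((1−p)/(2−p))|11⟩`. -/
noncomputable def ketChi0 (p : ℝ) : Q2 → ℂ :=
  ketChi (Real.sqrt (1 / (2 - p))) (Real.sqrt ((1 - p) / (2 - p)))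

/-- Reduced density matrix on the first qubit (trace out the second qubit). -/
noncomputable def trSecond (ρ : Matrix Q2 Q2 ℂ) : Matrix (Fin 2) (Fin 2) ℂ :=
  Matrix.of fun i k => ∑ j : Fin 2, ρ (i, j) (k, j)

/-- Reduced density matrix on the second qubit (trace out the first qubit). -/
noncomputable def trFirst (ρ : Matrix Q2 Q2 ℂ) : Matrix (Fin 2) (Fin 2) ℂ :=
  Matrix.of fun j l => ∑ i : Fin 2, ρ (i, j) (i, l)

/-- A unit vector `ψ ∈ ℂ²⊗ℂ²` is maximally entangled if both reduced density
matrices of `|ψ⟩⟨ψ|` equal `I/2`. -/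
def MaxEnt (ψ : Q2 → ℂ) : Prop :=
  (∑ ij : Q2, Complex.normSq (ψ ij)) = 1 ∧
  trSecond (outer ψ) = (1 / 2 : ℂ) • (1 : Matrix (Fin 2) (Fin 2) ℂ) ∧
  trFirst (outer ψ) = (1 / 2 : ℂ) • (1 : Matrix (Fin 2) (Fin 2) ℂ)

/-- The real expectation value `⟨ψ|ρ|ψ⟩`. -/
noncomputable def expectation (ψ : Q2 → ℂ) (ρ : Matrix Q2 Q2 ℂ) : ℝ :=
  (∑ i : Q2, ∑ j : Q2, star (ψ i) * ρ i j * ψ j).re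

/-- Fidelity (fully entangled fraction): `F(ρ) = sup_Ψ ⟨Ψ|ρ|Ψ⟩` over maximally
entangled unit vectors `Ψ`. -/
noncomputable def Fid (ρ : Matrix Q2 Q2 ℂ) : ℝ :=
  sSup {x : ℝ | ∃ ψ : Q2 → ℂ, MaxEnt ψ ∧ x = expectation ψ ρ}

/-- Partial transposition on the second qubit: `(ρ^Γ)_{(i,j),(k,l)} = ρ_{(i,l),(k,j)}`. -/
def ptrans (ρ : Matrix Q2 Q2 ℂ) : Matrix Q2 Q2 ℂ :=
  Matrix.of fun ij kl => ρ (ij.1, kl.2) (kl.1, ij.2)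

/-- The Verstraete–Verschelde maximum achievable fidelity under trace-preserving LOCC,
as the value of the semidefinite program
`F*(ρ) = sup { 1/2 − Tr(X ρ^Γ) : X Hermitian, 0 ≤ X ≤ I, −I/2 ≤ X^Γ ≤ I/2 }`. -/
noncomputable def FStar (ρ : Matrix Q2 Q2 ℂ) : ℝ :=
  sSup {x : ℝ | ∃ X : Matrix Q2 Q2 ℂ,
    X.IsHermitian ∧ X.PosSemidef ∧ ((1 : Matrix Q2 Q2 ℂ) - X).PosSemidef ∧
    (ptrans X + (1 / 2 : ℂ) • (1 : Matrix Q2 Q2 ℂ)).PosSemidef ∧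
    ((1 / 2 : ℂ) • (1 : Matrix Q2 Q2 ℂ) - ptrans X).PosSemidef ∧
    x = 1 / 2 - ((X * ptrans ρ).trace).re}

/-- The Pauli matrix `σ_y`. -/
noncomputable def sigY : Matrix (Fin 2) (Fin 2) ℂ := !![0, -Complex.I; Complex.I, 0]

/-- The matrix `ρ (σ_y⊗σ_y) ρ̄ (σ_y⊗σ_y)` whose eigenvalues define the concurrence. -/
noncomputable def Rmat (ρ : Matrix Q2 Q2 ℂ) : Matrix Q2 Q2 ℂ :=
  ρ * (sigY ⊗ₖ sigY) * ρ.map (starRingEnd ℂ) * (sigY ⊗ₖ sigY)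

/-- `c` is the concurrence of `ρ`: `c = max(0, λ₁ − λ₂ − λ₃ − λ₄)` where
`λ₁ ≥ λ₂ ≥ λ₃ ≥ λ₄ ≥ 0` are the square roots of the eigenvalues (with multiplicity)
of `ρ (σ_y⊗σ_y) ρ̄ (σ_y⊗σ_y)`. -/
def IsConcurrence (ρ : Matrix Q2 Q2 ℂ) (c : ℝ) : Prop :=
  ∃ lam : Fin 4 → ℝ,
    (∀ i j : Fin 4, i ≤ j → lam j ≤ lam i) ∧
    (∀ i : Fin 4, 0 ≤ lam i) ∧
    (Rmat ρ).charpoly = ∏ i : Fin 4, (Polynomial.X - Polynomial.C ((lam i : ℂ) ^ 2)) ∧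
    c = max 0 (lam 0 - lam 1 - lam 2 - lam 3)

/-- `μ` is an eigenvalue of the matrix `A`. -/
def IsEigenvalue (A : Matrix Q2 Q2 ℂ) (μ : ℂ) : Prop :=
  ∃ v : Q2 → ℂ, v ≠ 0 ∧ A *ᵥ v = μ • v

lemma psd_proj {P : Matrix Q2 Q2 ℂ} (h1 : Pᴴ = P) (h2 : P * P = P) : P.PosSemidef := by
  have h := Matrix.posSemidef_conjTranspose_mul_self P
  rwa [h1, h2] at h

lemma psd_pair {M : Matrix Q2 Q2 ℂ} (h : M.PosSemidef) (i j : Q2) (u w : ℝ) :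
    0 ≤ u ^ 2 * (M i i).re + u * w * ((M i j).re + (M j i).re) + w ^ 2 * (M j j).re := by
  have h1 := h.dotProduct_mulVec_nonneg (Pi.single i (u : ℂ) + Pi.single j (w : ℂ))
  have h2 := (Complex.le_def.1 h1).1
  have e : star (Pi.single i (u : ℂ) + Pi.single j (w : ℂ) : Q2 → ℂ)
      = Pi.single i (u : ℂ) + Pi.single j (w : ℂ) := by
    ext k
    by_cases h1 : k = i <;> by_cases h2 : k = j <;> simp [Pi.single_apply, h1, h2] <;>
      split_ifs <;> simp
  rw [e] at h2
  simp [Matrix.mulVec_add, add_dotProduct, dotProduct_add] at h2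
  linarith

lemma trace_formula (p a b : ℝ) (hp0 : 0 < p) (hp1 : p < 1) (X : Matrix Q2 Q2 ℂ) :
    ((X * ptrans (ampDamp p (outer (ketChi a b)))).trace).re =
      a ^ 2 * (X (0, 0) (0, 0)).re + b ^ 2 * (1 - p) * (X (1, 1) (1, 1)).re
      + b ^ 2 * p * (X (1, 0) (1, 0)).re
      + a * b * √(1 - p) * ((X (0, 1) (1, 0)).re + (X (1, 0) (0, 1)).re) := by
  have s1 : √(1 - p) * √(1 - p) = 1 - p := Real.mul_self_sqrt (by linarith)
  have s2 : √p * √p = p := Real.mul_self_sqrt hp0.le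
  have key : ptrans (ampDamp p (outer (ketChi a b))) = Matrix.of fun ij kl =>
      ((if ij = (0, 0) ∧ kl = (0, 0) then a ^ 2 else
      if ij = (1, 1) ∧ kl = (1, 1) then b ^ 2 * (√(1 - p) * √(1 - p)) else
      if ij = (1, 0) ∧ kl = (1, 0) then b ^ 2 * (√p * √p) else
      if ij = (0, 1) ∧ kl = (1, 0) then a * b * √(1 - p) else
      if ij = (1, 0) ∧ kl = (0, 1) then a * b * √(1 - p) else 0 : ℝ) : ℂ) := by
    ext ⟨i, j⟩ ⟨k, l⟩
    fin_cases i <;> fin_cases j <;> fin_cases k <;> fin_cases l <;>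
      simp [ptrans, ampDamp, outer, ketChi, M0, M1, Matrix.mul_apply, Fintype.sum_prod_type,
        Matrix.one_apply] <;> ring
  rw [key, s1, s2]
  simp [Matrix.trace, Matrix.mul_apply, Fintype.sum_prod_type, -Complex.ofReal_mul,
    -Complex.ofReal_pow, -Complex.ofReal_sub]
  ring

lemma real_bound (p a b t : ℝ) (hp0 : 0 < p) (hp1 : p < 1) (hab : a ^ 2 + b ^ 2 = 1)
    (ha : 0 ≤ a) (hb : 0 ≤ b) (ht0 : 0 ≤ t) (ht : t ≤ 1 / 2) :
    2 * (a * b * √(1 - p)) * t - 2 * (b ^ 2 * p) * t ^ 2 ≤ (1 - p) / 2 := by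
  have hs : √(1 - p) ^ 2 = 1 - p := Real.sq_sqrt (by linarith)
  have hs0 : 0 ≤ √(1 - p) := Real.sqrt_nonneg _
  generalize √(1 - p) = s at hs hs0 ⊢
  obtain rfl : p = 1 - s ^ 2 := by linarith
  rcases le_total (a * s) (b * (1 - s ^ 2)) with h | h
  · have h3 : a ^ 2 * s ^ 2 ≤ b ^ 2 * (1 - s ^ 2) ^ 2 := by
      have := mul_self_le_mul_self (by positivity) h
      nlinarith
    have h4 : a ^ 2 ≤ 1 - s ^ 2 := by
      have : b ^ 2 = 1 - a ^ 2 := by linarith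
      rw [this] at h3
      have h5 : (a ^ 2 - (1 - s ^ 2)) * (s ^ 2 + (1 - s ^ 2) ^ 2) ≤ 0 := by
        nlinarith [mul_nonneg hp0.le (sq_nonneg (s ^ 2))]
      by_contra hc
      push Not at hc
      have : 0 < (a ^ 2 - (1 - s ^ 2)) * (s ^ 2 + (1 - s ^ 2) ^ 2) :=
        mul_pos (by linarith) (by positivity)
      linarith
    have h6 : 2 * (a * b * s) * t * (1 - s ^ 2) - 2 * (b ^ 2 * (1 - s ^ 2)) * t ^ 2 * (1 - s ^ 2)
        ≤ a ^ 2 * s ^ 2 / 2 := by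
      nlinarith [sq_nonneg (2 * (b * (1 - s ^ 2)) * t - a * s)]
    have h7 : a ^ 2 * s ^ 2 ≤ (1 - s ^ 2) * s ^ 2 := mul_le_mul_of_nonneg_right h4 (sq_nonneg _)
    refine le_of_mul_le_mul_right ?_ hp0
    nlinarith
  · have h1 : 2 * (a * b * s) * t - 2 * (b ^ 2 * (1 - s ^ 2)) * t ^ 2
        ≤ a * b * s - b ^ 2 * (1 - s ^ 2) / 2 := by
      have e1 : 0 ≤ (1 - 2 * t) * b * (a * s - b * (1 - s ^ 2)) := by
        apply mul_nonneg (mul_nonneg (by linarith) hb) (by linarith)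
      have e2 : 0 ≤ (1 - 2 * t) * (1 - 2 * t) * (b ^ 2 * (1 - s ^ 2)) :=
        mul_nonneg (mul_self_nonneg _) (mul_nonneg (sq_nonneg _) hp0.le)
      nlinarith
    nlinarith [sq_nonneg (a * s - b)]

lemma feas_bound (p a b : ℝ) (hp0 : 0 < p) (hp1 : p < 1) (hab : a ^ 2 + b ^ 2 = 1)
    (hb : 0 ≤ b) (x : ℝ) (hx : ∃ X : Matrix Q2 Q2 ℂ,
    X.IsHermitian ∧ X.PosSemidef ∧ ((1 : Matrix Q2 Q2 ℂ) - X).PosSemidef ∧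
    (ptrans X + (1 / 2 : ℂ) • (1 : Matrix Q2 Q2 ℂ)).PosSemidef ∧
    ((1 / 2 : ℂ) • (1 : Matrix Q2 Q2 ℂ) - ptrans X).PosSemidef ∧
    x = 1 / 2 - ((X * ptrans (ampDamp p (outer (ketChi a b)))).trace).re) : x ≤ 1 - p / 2 := by
  obtain ⟨X, -, h0, -, -, h3, rfl⟩ := hx
  rw [trace_formula p a b hp0 hp1]
  have a1 := psd_pair h0 (0, 0) (1, 1) 1 0
  have a2 := psd_pair h0 (0, 0) (1, 1) 0 1
  have a3 := psd_pair h0 (0, 1) (1, 0) (-((X (0, 1) (1, 0)).re + (X (1, 0) (0, 1)).re)) 1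
  have b1 := psd_pair h3 (0, 0) (1, 1) 1 1
  have b2 := psd_pair h3 (0, 0) (1, 1) 1 (-1)
  have b3 := psd_pair h3 (0, 1) (1, 0) 1 0
  simp [ptrans] at a1 a2 b1 b2 b3
  set x00 := (X (0, 0) (0, 0)).re
  set x11 := (X (1, 1) (1, 1)).re
  set x01 := (X (0, 1) (0, 1)).re
  set x10 := (X (1, 0) (1, 0)).re
  set y1 := (X (0, 1) (1, 0)).re
  set y2 := (X (1, 0) (0, 1)).re
  have hy : |(y1 + y2) / 2| ≤ 1 / 2 := by
    rw [abs_le]; constructor <;> linarith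
  have hr := real_bound p |a| b |(y1 + y2) / 2| hp0 hp1 (by rwa [sq_abs]) (abs_nonneg _) hb
    (abs_nonneg _) hy
  rw [sq_abs] at hr
  have hc : -(a * b * √(1 - p) * (y1 + y2)) ≤ 2 * (|a| * b * √(1 - p)) * |(y1 + y2) / 2| := by
    have e : 2 * (|a| * b * √(1 - p)) * |(y1 + y2) / 2| = |a * b * √(1 - p) * (y1 + y2)| := by
      simp only [abs_mul, abs_div, abs_of_nonneg hb, abs_of_nonneg (Real.sqrt_nonneg _), abs_two]
      ring
    rw [e]
    exact neg_le_abs _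
  have hx10 : (y1 + y2) ^ 2 / 2 ≤ x10 := by
    nlinarith [sq_nonneg (y1 + y2)]
  have g1 : 0 ≤ a ^ 2 * x00 := by positivity
  have g2 : 0 ≤ b ^ 2 * (1 - p) * x11 := mul_nonneg (mul_nonneg (sq_nonneg _) (by linarith)) a2
  have g3 : b ^ 2 * p * ((y1 + y2) ^ 2 / 2) ≤ b ^ 2 * p * x10 :=
    mul_le_mul_of_nonneg_left hx10 (by positivity)
  nlinarith

lemma FStar_le (p a b : ℝ) (hp0 : 0 < p) (hp1 : p < 1) (hab : a ^ 2 + b ^ 2 = 1)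
    (hb : 0 ≤ b) : FStar (ampDamp p (outer (ketChi a b))) ≤ 1 - p / 2 :=
  Real.sSup_le (fun x hx => feas_bound p a b hp0 hp1 hab hb x hx) (by linarith)

/-- The projection on the singlet. -/
noncomputable def Xopt : Matrix Q2 Q2 ℂ := Matrix.of fun ij kl =>
  if ij = (0, 1) ∧ kl = (0, 1) then 1 / 2 else
  if ij = (1, 0) ∧ kl = (1, 0) then 1 / 2 else
  if ij = (0, 1) ∧ kl = (1, 0) then -1 / 2 else
  if ij = (1, 0) ∧ kl = (0, 1) then -1 / 2 else 0

lemma Xopt_herm : Xoptᴴ = Xopt := by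
  ext ⟨i, j⟩ ⟨k, l⟩
  fin_cases i <;> fin_cases j <;> fin_cases k <;> fin_cases l <;> simp [Xopt]

lemma Xopt_idem : Xopt * Xopt = Xopt := by
  ext ⟨i, j⟩ ⟨k, l⟩
  fin_cases i <;> fin_cases j <;> fin_cases k <;> fin_cases l <;>
    simp [Xopt, Matrix.mul_apply, Fintype.sum_prod_type] <;> norm_num

lemma Xpt_herm : (ptrans Xopt + (1 / 2 : ℂ) • (1 : Matrix Q2 Q2 ℂ))ᴴ
    = ptrans Xopt + (1 / 2 : ℂ) • (1 : Matrix Q2 Q2 ℂ) := by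
  ext ⟨i, j⟩ ⟨k, l⟩
  fin_cases i <;> fin_cases j <;> fin_cases k <;> fin_cases l <;>
    simp [Xopt, ptrans, Matrix.one_apply]

lemma Xpt_idem : (ptrans Xopt + (1 / 2 : ℂ) • (1 : Matrix Q2 Q2 ℂ))
    * (ptrans Xopt + (1 / 2 : ℂ) • (1 : Matrix Q2 Q2 ℂ))
    = ptrans Xopt + (1 / 2 : ℂ) • (1 : Matrix Q2 Q2 ℂ) := by
  ext ⟨i, j⟩ ⟨k, l⟩
  fin_cases i <;> fin_cases j <;> fin_cases k <;> fin_cases l <;>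
    simp [Xopt, ptrans, Matrix.one_apply, Matrix.mul_apply, Fintype.sum_prod_type] <;> norm_num

lemma psd_compl {P : Matrix Q2 Q2 ℂ} (h1 : Pᴴ = P) (h2 : P * P = P) :
    ((1 : Matrix Q2 Q2 ℂ) - P).PosSemidef := by
  apply psd_proj
  · simp [h1]
  · simp [sub_mul, mul_sub, h2]

lemma FStar_chi0 (p : ℝ) (hp0 : 0 < p) (hp1 : p < 1) :
    FStar (ampDamp p (outer (ketChi0 p))) = 1 - p / 2 := by
  have hA : √(1 / (2 - p)) ^ 2 = 1 / (2 - p) :=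
    Real.sq_sqrt (div_nonneg zero_le_one (by linarith))
  have hB : √((1 - p) / (2 - p)) ^ 2 = (1 - p) / (2 - p) :=
    Real.sq_sqrt (div_nonneg (by linarith) (by linarith))
  have h2p : (2 - p) ≠ 0 := by linarith
  have hab : √(1 / (2 - p)) ^ 2 + √((1 - p) / (2 - p)) ^ 2 = 1 := by
    rw [hA, hB]; field_simp; ring
  have hC : √(1 / (2 - p)) * √((1 - p) / (2 - p)) * √(1 - p) = (1 - p) / (2 - p) := by
    rw [← Real.sqrt_mul (div_nonneg zero_le_one (by linarith)),
      ← Real.sqrt_mul (mul_nonneg (div_nonneg zero_le_one (by linarith))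
        (div_nonneg (by linarith) (by linarith)))]
    rw [show 1 / (2 - p) * ((1 - p) / (2 - p)) * (1 - p) = ((1 - p) / (2 - p)) ^ 2 by
      field_simp]
    exact Real.sqrt_sq (div_nonneg (by linarith) (by linarith))
  refine le_antisymm (FStar_le p _ _ hp0 hp1 hab (Real.sqrt_nonneg _)) ?_
  refine le_csSup ⟨1 - p / 2, fun x hx =>
    feas_bound p _ _ hp0 hp1 hab (Real.sqrt_nonneg _) x hx⟩ ?_
  refine ⟨Xopt, Xopt_herm, psd_proj Xopt_herm Xopt_idem, psd_compl Xopt_herm Xopt_idem,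
    psd_proj Xpt_herm Xpt_idem, ?_, ?_⟩
  · have h := psd_compl Xpt_herm Xpt_idem
    have e : (1 / 2 : ℂ) • (1 : Matrix Q2 Q2 ℂ) - ptrans Xopt
        = 1 - (ptrans Xopt + (1 / 2 : ℂ) • (1 : Matrix Q2 Q2 ℂ)) := by
      have : (1 : Matrix Q2 Q2 ℂ) = (1 / 2 : ℂ) • 1 + (1 / 2 : ℂ) • 1 := by
        rw [← add_smul]; norm_num
      nth_rewrite 2 [this]
      abel
    rwa [e]
  · rw [ketChi0, trace_formula p _ _ hp0 hp1, hA, hB, hC]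
    simp [Xopt]
    field_simp
    ring

/-- Proposition 3: For `0 < p < 1`, the maximum achievable fidelity for
the amplitude damping channel, `𝓕(Λ_p) = sup { F*(ρ(χ(α), Λ_p)) : 1/2 ≤ α² < 1 }`,
equals `1 − p/2` and is attained at the non-maximally entangled state `|χ₀⟩`. -/
theorem channel_optimal_fidelity (p : ℝ) (hp0 : 0 < p) (hp1 : p < 1) :
    sSup {x : ℝ | ∃ α : ℝ, 1 / 2 ≤ α ^ 2 ∧ α ^ 2 < 1 ∧
        x = FStar (ampDamp p (outer (ketChi α (Real.sqrt (1 - α ^ 2)))))} = 1 - p / 2 ∧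
    FStar (ampDamp p (outer (ketChi0 p))) = 1 - p / 2 := by
  have h2p : (0 : ℝ) < 2 - p := by linarith
  refine ⟨?_, FStar_chi0 p hp0 hp1⟩
  have ub : ∀ x ∈ {x : ℝ | ∃ α : ℝ, 1 / 2 ≤ α ^ 2 ∧ α ^ 2 < 1 ∧
        x = FStar (ampDamp p (outer (ketChi α (Real.sqrt (1 - α ^ 2)))))}, x ≤ 1 - p / 2 := by
    rintro x ⟨α, -, h1, rfl⟩
    refine FStar_le p _ _ hp0 hp1 ?_ (Real.sqrt_nonneg _)
    rw [Real.sq_sqrt (by linarith)]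
    ring
  refine le_antisymm (Real.sSup_le ub (by linarith)) (le_csSup ⟨_, ub⟩ ?_)
  have hA : √(1 / (2 - p)) ^ 2 = 1 / (2 - p) :=
    Real.sq_sqrt (div_nonneg zero_le_one h2p.le)
  refine ⟨√(1 / (2 - p)), ?_, ?_, ?_⟩
  · rw [hA, div_le_div_iff₀ (by norm_num) h2p]; linarith
  · rw [hA, div_lt_one h2p]; linarith
  · rw [hA, show 1 - 1 / (2 - p) = (1 - p) / (2 - p) by field_simp; ring]
    exact (FStar_chi0 p hp0 hp1).symm
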